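/- Let n ≥ 2, let x₀ ∈ ℝⁿ, R > 0, and let B = B_R(x₀) be the closed ball of radius R centred at x₀, with open interior B°. Let a : B × ℝ → ℝ be C² with a(x,0) = 0 and ∂_μ a(x,μ) ≥ 0 for all (x,μ) ∈ B × ℝ. Suppose there exist a C² function F : ℝ → ℝ and constants δ, ε > 0 with F(0) = 0, F'(μ) ≥ 0 for all μ ∈ ℝ, |F(μ)| ≥ δ|μ|^{1+ε} for all μ ∈ ℝ, and such that F(μ) ≤ a(x,μ) for all x ∈ B and μ ≥ 0, while a(x,μ) ≤ F(μ) for all x ∈ B and μ ≤ 0. Then there exists a constant C > 0 such that every function u : B → ℝ that is continuous on B, twice continuously differentiable on B°, and satisfies −Δu(x) + a(x,u(x)) = 0 for all x ∈ B°, obeys |u(x₀)| ≤ C. In particular C is independent of the boundary values of u. -/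

import Mathlib

/-!
This is the Keller–Osserman estimate. Put `ρ(x) = R² - |x - x₀|²` and `p = 2/ε`; the exponent is
chosen so that `(ρ^{-p})^{1+ε} = ρ^{-p-2}`, the order to which `Δ(ρ^{-p})` blows up at the boundary
of the ball. If `u(x₀) > 0`, let `M` be the maximum of `u ρ^p` over the closed ball. The weight
vanishes on the sphere, so `M` is attained at an interior point `y`, where `M ρ^{-p}` touches `u`
from above. Hence at `y`
`δ (M ρ^{-p})^{1+ε} = δ u^{1+ε} ≤ Δu ≤ Δ(M ρ^{-p}) ≤ M c R² ρ^{-p-2}`,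
so that `δ M^ε ≤ c R²` whatever the boundary values of `u`. The same bound applied to `-u` controls
`|u(x₀)|`.
-/

open Set Metric

/-- The Euclidean Laplacian `Δu(x) = ∑ i, ∂²u/∂xᵢ²(x)`. -/
noncomputable def lap {n : ℕ} (u : EuclideanSpace ℝ (Fin n) → ℝ)
    (x : EuclideanSpace ℝ (Fin n)) : ℝ :=
  ∑ i : Fin n,
    fderiv ℝ (fun y => fderiv ℝ u y (EuclideanSpace.single i 1)) x (EuclideanSpace.single i 1)

open Filter Topology Module InnerProductSpace Laplacian

section SecondDerivative

theorem deriv_deriv_nonpos_of_isLocalMax {f : ℝ → ℝ} {t : ℝ} (hf : ContinuousAt f t)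
    (hmax : IsLocalMax f t) : deriv (deriv f) t ≤ 0 := by
  by_contra! hpos
  -- A positive second derivative makes `t` a local minimum as well, so `f` is locally constant.
  have hmin : IsLocalMin f t := isLocalMin_of_deriv_deriv_pos hpos hmax.deriv_eq_zero hf
  have hconst : f =ᶠ[𝓝 t] fun _ => f t := by
    filter_upwards [hmax, hmin] with s hle hge using le_antisymm hle hge
  have hzero : deriv (deriv f) t = 0 := by simp [hconst.deriv.deriv_eq]
  exact hpos.ne' hzero

variable {E F : Type*} [NormedAddCommGroup E] [NormedSpace ℝ E]
  [NormedAddCommGroup F] [NormedSpace ℝ F]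

theorem fderiv_fderiv_apply_const {f : E → F} {x : E} (hf : ContDiffAt ℝ 2 f x) (v w : E) :
    fderiv ℝ (fun y => fderiv ℝ f y v) x w = fderiv ℝ (fderiv ℝ f) x w v := by
  have hf' : DifferentiableAt ℝ (fderiv ℝ f) x := by fun_prop (disch := norm_num)
  simp [fderiv_clm_apply hf' (differentiableAt_const v)]

theorem deriv_deriv_add_smul {f : E → F} {x : E} (hf : ContDiffAt ℝ 2 f x) (v : E) :
    deriv (deriv fun t : ℝ => f (x + t • v)) 0 = fderiv ℝ (fderiv ℝ f) x v v := by
  have hline : Tendsto (fun t : ℝ => x + t • v) (𝓝 0) (𝓝 x) :=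
    Continuous.tendsto' (by fun_prop) 0 x (by simp)
  have hderiv : deriv (fun t : ℝ => f (x + t • v)) =ᶠ[𝓝 0] fun t => fderiv ℝ f (x + t • v) v := by
    filter_upwards [hline.eventually (hf.eventually (by simp))] with t ht
    exact (ht.differentiableAt two_ne_zero).deriv_comp_add_smul
  have hf' : DifferentiableAt ℝ (fun y => fderiv ℝ f y v) (x + (0 : ℝ) • v) := by
    rw [zero_smul, add_zero]
    fun_prop (disch := norm_num)
  rw [hderiv.deriv_eq, hf'.deriv_comp_add_smul, zero_smul, add_zero, fderiv_fderiv_apply_const hf]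

theorem fderiv_fderiv_apply_self_nonpos_of_isLocalMax {f : E → ℝ} {x : E}
    (hf : ContDiffAt ℝ 2 f x) (hmax : IsLocalMax f x) (v : E) :
    fderiv ℝ (fderiv ℝ f) x v v ≤ 0 := by
  have hline : Tendsto (fun t : ℝ => x + t • v) (𝓝 0) (𝓝 (x + (0 : ℝ) • v)) :=
    Continuous.tendsto (by fun_prop) 0
  rw [← deriv_deriv_add_smul hf]
  refine deriv_deriv_nonpos_of_isLocalMax (ContinuousAt.comp ?_ hline) ?_
  · simpa using hf.continuousAt
  · exact IsLocalMax.comp_continuous (f := f) (by simpa using hmax) hline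

theorem fderiv_fderiv_real_comp {φ : ℝ → ℝ} {f : E → ℝ} {x : E} (hφ : ContDiffAt ℝ 2 φ (f x))
    (hf : ContDiffAt ℝ 2 f x) (v w : E) :
    fderiv ℝ (fderiv ℝ (φ ∘ f)) x v w =
      deriv (deriv φ) (f x) * (fderiv ℝ f x v * fderiv ℝ f x w) +
        deriv φ (f x) * fderiv ℝ (fderiv ℝ f) x v w := by
  have hchain : fderiv ℝ (φ ∘ f) =ᶠ[𝓝 x] fun y => deriv φ (f y) • fderiv ℝ f y := by
    filter_upwards [hf.eventually (by simp),
      hf.continuousAt.eventually (hφ.eventually (by simp))] with y hfy hφy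
    exact ((hφy.differentiableAt two_ne_zero).hasDerivAt.comp_hasFDerivAt y
      (hfy.differentiableAt two_ne_zero).hasFDerivAt).fderiv
  have hfx : HasFDerivAt f (fderiv ℝ f x) x := (hf.differentiableAt two_ne_zero).hasFDerivAt
  have hf' : DifferentiableAt ℝ (fderiv ℝ f) x := by fun_prop (disch := norm_num)
  have hφ' : HasDerivAt (deriv φ) (deriv (deriv φ) (f x)) (f x) := by
    have h : DifferentiableAt ℝ (fun t => fderiv ℝ φ t 1) (f x) := by
      fun_prop (disch := norm_num)
    simpa using h.hasDerivAt
  have hmul : HasFDerivAt (fun y => deriv φ (f y) • fderiv ℝ f y) _ x :=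
    (hφ'.comp_hasFDerivAt x hfx).smul hf'.hasFDerivAt
  simp only [hchain.fderiv_eq, hmul.fderiv, add_apply, smul_apply,
    ContinuousLinearMap.smulRight_apply, Function.comp_apply, smul_eq_mul]
  ring

end SecondDerivative

section Laplacian

variable {E : Type*} [NormedAddCommGroup E] [InnerProductSpace ℝ E] [FiniteDimensional ℝ E]
  {f g : E → ℝ} {x : E}

theorem laplacian_eq_sum_fderiv_fderiv {ι : Type*} [Fintype ι] (b : OrthonormalBasis ι ℝ E)
    (f : E → ℝ) (x : E) : Δ f x = ∑ i, fderiv ℝ (fderiv ℝ f) x (b i) (b i) := by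
  simp [laplacian_eq_iteratedFDeriv_orthonormalBasis f b, iteratedFDeriv_two_apply]

theorem lap_eq_laplacian {n : ℕ} {u : EuclideanSpace ℝ (Fin n) → ℝ} {x : EuclideanSpace ℝ (Fin n)}
    (hu : ContDiffAt ℝ 2 u x) : lap u x = Δ u x := by
  simp [lap, fderiv_fderiv_apply_const hu,
    laplacian_eq_sum_fderiv_fderiv (EuclideanSpace.basisFun (Fin n) ℝ)]

theorem laplacian_nonpos_of_isLocalMax (hf : ContDiffAt ℝ 2 f x) (hmax : IsLocalMax f x) :
    Δ f x ≤ 0 := by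
  rw [laplacian_eq_sum_fderiv_fderiv (stdOrthonormalBasis ℝ E)]
  exact Finset.sum_nonpos fun i _ => fderiv_fderiv_apply_self_nonpos_of_isLocalMax hf hmax _

theorem laplacian_le_laplacian_of_eventuallyLE (hf : ContDiffAt ℝ 2 f x) (hg : ContDiffAt ℝ 2 g x)
    (hle : f ≤ᶠ[𝓝 x] g) (heq : f x = g x) : Δ f x ≤ Δ g x := by
  have hmax : IsLocalMax (f - g) x := by
    filter_upwards [hle] with y hy
    simpa [heq] using hy
  have hsub : Δ (f - g) x ≤ 0 := laplacian_nonpos_of_isLocalMax (hf.sub hg) hmax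
  rw [hf.laplacian_sub hg] at hsub
  linarith

theorem laplacian_real_comp {φ : ℝ → ℝ} (hφ : ContDiffAt ℝ 2 φ (f x)) (hf : ContDiffAt ℝ 2 f x) :
    Δ (φ ∘ f) x =
      deriv (deriv φ) (f x) * ‖fderiv ℝ f x‖ ^ 2 + deriv φ (f x) * Δ f x := by
  let b := stdOrthonormalBasis ℝ E
  have hnorm : ∑ i, fderiv ℝ f x (b i) * fderiv ℝ f x (b i) = ‖fderiv ℝ f x‖ ^ 2 := by
    simp only [b.norm_dual, sq]
  simp only [laplacian_eq_sum_fderiv_fderiv b, fderiv_fderiv_real_comp hφ hf,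
    Finset.sum_add_distrib, ← Finset.mul_sum, hnorm]

end Laplacian

section BallDefect

variable {E : Type*} [NormedAddCommGroup E] {x₀ x : E} {R : ℝ}

/-- The quantity `R² - ‖x - x₀‖²`, positive exactly inside the ball of radius `R` about `x₀`; its
negative powers are the barriers. -/
def ballDefect (x₀ : E) (R : ℝ) (x : E) : ℝ :=
  R ^ 2 - ‖x - x₀‖ ^ 2

theorem ballDefect_center (x₀ : E) (R : ℝ) : ballDefect x₀ R x₀ = R ^ 2 := by
  simp [ballDefect]

theorem ballDefect_pos (hx : x ∈ ball x₀ R) : 0 < ballDefect x₀ R x :=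
  sub_pos.2 (pow_lt_pow_left₀ (mem_ball_iff_norm.1 hx) (norm_nonneg _) two_ne_zero)

theorem ballDefect_of_mem_sphere (hx : x ∈ sphere x₀ R) : ballDefect x₀ R x = 0 := by
  simp [ballDefect, mem_sphere_iff_norm.1 hx]

theorem continuous_ballDefect (x₀ : E) (R : ℝ) : Continuous (ballDefect x₀ R) := by
  unfold ballDefect
  fun_prop

theorem exists_isMaxOn_mul_ballDefect_rpow [ProperSpace E] {u : E → ℝ} {p : ℝ} (hR : 0 < R)
    (hp : 0 < p) (hu : ContinuousOn u (closedBall x₀ R)) (hu₀ : 0 < u x₀) :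
    ∃ y ∈ ball x₀ R, IsMaxOn (fun x => u x * ballDefect x₀ R x ^ p) (closedBall x₀ R) y := by
  have hcont : ContinuousOn (fun x => u x * ballDefect x₀ R x ^ p) (closedBall x₀ R) :=
    hu.mul ((continuous_ballDefect x₀ R).rpow_const fun _ => Or.inr hp.le).continuousOn
  refine (isCompact_closedBall x₀ R).exists_isMaxOn_mem_subset hcont
    (mem_closedBall_self hR.le) fun z hz => ?_
  rw [closedBall_sdiff_ball] at hz
  rw [ballDefect_of_mem_sphere hz, Real.zero_rpow hp.ne', mul_zero, ballDefect_center]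
  positivity

variable [InnerProductSpace ℝ E]

theorem contDiff_ballDefect {n : WithTop ℕ∞} (x₀ : E) (R : ℝ) : ContDiff ℝ n (ballDefect x₀ R) :=
  contDiff_const.sub ((contDiff_id.sub contDiff_const).norm_sq ℝ)

theorem fderiv_ballDefect (x₀ x : E) (R : ℝ) :
    fderiv ℝ (ballDefect x₀ R) x = (-2 : ℝ) • innerSL ℝ (x - x₀) := by
  have h := (((hasStrictFDerivAt_norm_sq (x - x₀)).hasFDerivAt.comp x
    ((hasFDerivAt_id x).sub_const x₀)).const_sub (R ^ 2)).fderiv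
  refine h.trans ?_
  ext v
  simp

theorem norm_fderiv_ballDefect (x₀ x : E) (R : ℝ) :
    ‖fderiv ℝ (ballDefect x₀ R) x‖ = 2 * ‖x - x₀‖ := by
  rw [fderiv_ballDefect, norm_smul, innerSL_apply_norm]
  norm_num

theorem fderiv_fderiv_ballDefect_apply_self (x₀ x v : E) (R : ℝ) :
    fderiv ℝ (fderiv ℝ (ballDefect x₀ R)) x v v = -2 * ‖v‖ ^ 2 := by
  have hinner : HasFDerivAt (fun y => (-2 : ℝ) * inner ℝ v (y - x₀)) ((-2 : ℝ) • innerSL ℝ v) x :=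
    ((innerSL ℝ v).hasFDerivAt.comp x ((hasFDerivAt_id x).sub_const x₀)).const_mul (-2)
  have hfderiv : (fun y => fderiv ℝ (ballDefect x₀ R) y v) =
      fun y => (-2 : ℝ) * inner ℝ v (y - x₀) := by
    ext y
    rw [fderiv_ballDefect, real_inner_comm]
    rfl
  rw [← fderiv_fderiv_apply_const (contDiff_ballDefect x₀ R).contDiffAt, hfderiv, hinner.fderiv]
  simp

variable [FiniteDimensional ℝ E]

theorem laplacian_ballDefect (x₀ x : E) (R : ℝ) :
    Δ (ballDefect x₀ R) x = -2 * finrank ℝ E := by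
  simp [laplacian_eq_sum_fderiv_fderiv (stdOrthonormalBasis ℝ E),
    fderiv_fderiv_ballDefect_apply_self, mul_comm]

theorem laplacian_ballDefect_rpow (hx : ballDefect x₀ R x ≠ 0) (q : ℝ) :
    Δ (fun y => ballDefect x₀ R y ^ q) x =
      4 * q * (q - 1) * ‖x - x₀‖ ^ 2 * ballDefect x₀ R x ^ (q - 2) -
        2 * finrank ℝ E * q * ballDefect x₀ R x ^ (q - 1) := by
  have hderiv (r : ℝ) : deriv (deriv fun t : ℝ => t ^ q) r = q * (q - 1) * r ^ (q - 2) := by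
    rw [Real.deriv_rpow_const', deriv_const_mul_field, Real.deriv_rpow_const,
      show q - 1 - 1 = q - 2 by ring, mul_assoc]
  have hcomp := laplacian_real_comp (Real.contDiffAt_rpow_const_of_ne (p := q) hx)
    (contDiff_ballDefect x₀ R).contDiffAt
  refine hcomp.trans ?_
  rw [hderiv, Real.deriv_rpow_const, norm_fderiv_ballDefect, laplacian_ballDefect]
  ring

/-- The constant `c` for which `Δ(ρ ^ (-p)) ≤ c R² ρ ^ (-p - 2)`, where `ρ = R² - ‖x - x₀‖²` in
dimension `d`. -/
def barrierConst (d : ℕ) (p : ℝ) : ℝ :=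
  p * (2 * d + 4 * (p + 1))

theorem laplacian_ballDefect_rpow_neg_le {p : ℝ} (hp : 0 ≤ p) (hx : x ∈ ball x₀ R) :
    Δ (fun y => ballDefect x₀ R y ^ (-p)) x ≤
      barrierConst (finrank ℝ E) p * R ^ 2 * ballDefect x₀ R x ^ (-p - 2) := by
  set ρ := ballDefect x₀ R x with hρ_def
  have hρ : 0 < ρ := ballDefect_pos hx
  have hρR : ρ ≤ R ^ 2 := sub_le_self _ (sq_nonneg _)
  have hxR : ‖x - x₀‖ ^ 2 ≤ R ^ 2 := (sub_pos.1 hρ).le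
  have hpow : ρ ^ (-p - 1) = ρ * ρ ^ (-p - 2) := by
    rw [← Real.rpow_one_add' hρ.le (by linarith), show 1 + (-p - 2) = -p - 1 by ring]
  calc Δ (fun y => ballDefect x₀ R y ^ (-p)) x
      = p * (2 * finrank ℝ E * ρ + 4 * (p + 1) * ‖x - x₀‖ ^ 2) * ρ ^ (-p - 2) := by
        rw [laplacian_ballDefect_rpow hρ.ne', ← hρ_def, hpow]
        ring
    _ ≤ p * (2 * finrank ℝ E * R ^ 2 + 4 * (p + 1) * R ^ 2) * ρ ^ (-p - 2) := by gcongr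
    _ = barrierConst (finrank ℝ E) p * R ^ 2 * ρ ^ (-p - 2) := by
        rw [barrierConst]
        ring

end BallDefect

section KellerOsserman

/-- The bound at the centre of a ball of radius `R` in dimension `d` for solutions of
`Δu ≥ δ u ^ (1 + ε)`. With `p = 2 / ε` and `M` the maximum of `u * ballDefect x₀ R ^ p`,
it combines `δ M ^ ε ≤ barrierConst d p * R²` with `u x₀ * R ^ (2p) ≤ M`. -/
noncomputable def kellerOssermanBound (d : ℕ) (R δ ε : ℝ) : ℝ :=
  (barrierConst d (2 / ε) / (δ * R ^ 2)) ^ ε⁻¹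

variable {E : Type*} [NormedAddCommGroup E] [InnerProductSpace ℝ E] [FiniteDimensional ℝ E]
  {x₀ : E} {R δ ε : ℝ} {u : E → ℝ}

theorem kellerOssermanBound_pos (d : ℕ) (hR : 0 < R) (hδ : 0 < δ) (hε : 0 < ε) :
    0 < kellerOssermanBound d R δ ε := by
  unfold kellerOssermanBound barrierConst
  positivity

theorem le_kellerOssermanBound_of_mul_rpow_le {d : ℕ} {s M : ℝ} (hR : 0 < R) (hδ : 0 < δ)
    (hε : 0 < ε) (hs : 0 ≤ s) (hsM : s * (R ^ 2) ^ (2 / ε) ≤ M)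
    (hM : δ * M ^ ε ≤ barrierConst d (2 / ε) * R ^ 2) : s ≤ kellerOssermanBound d R δ ε := by
  have hsMε : s ^ ε * (R ^ 2) ^ 2 ≤ M ^ ε := by
    have hpε : 2 / ε * ε = 2 := div_mul_cancel₀ 2 hε.ne'
    rw [← Real.rpow_two (R ^ 2), ← hpε, Real.rpow_mul (by positivity),
      ← Real.mul_rpow hs (by positivity)]
    gcongr
  rw [kellerOssermanBound, Real.le_rpow_inv_iff_of_pos hs
    (by unfold barrierConst; positivity) hε, le_div_iff₀ (by positivity)]
  refine le_of_mul_le_mul_right ?_ (show 0 < R ^ 2 by positivity)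
  calc s ^ ε * (δ * R ^ 2) * R ^ 2 = δ * (s ^ ε * (R ^ 2) ^ 2) := by ring
    _ ≤ δ * M ^ ε := by gcongr
    _ ≤ barrierConst d (2 / ε) * R ^ 2 := hM

theorem mul_rpow_le_of_eventuallyLE_barrier {M : ℝ} {y : E} (hε : 0 < ε) (hM : 0 < M)
    (hy : y ∈ ball x₀ R) (hu : ContDiffAt ℝ 2 u y)
    (hle : u ≤ᶠ[𝓝 y] fun x => M * ballDefect x₀ R x ^ (-(2 / ε)))
    (heq : u y = M * ballDefect x₀ R y ^ (-(2 / ε)))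
    (hsub : δ * u y ^ (1 + ε) ≤ Δ u y) :
    δ * M ^ ε ≤ barrierConst (finrank ℝ E) (2 / ε) * R ^ 2 := by
  set p := 2 / ε with hp_def
  set ρ := ballDefect x₀ R y
  have hρ : 0 < ρ := ballDefect_pos hy
  have hbarrier : ContDiffAt ℝ 2 (fun x => ballDefect x₀ R x ^ (-p)) y :=
    (contDiff_ballDefect x₀ R).contDiffAt.rpow_const_of_ne hρ.ne'
  have hpow : u y ^ (1 + ε) = M * ρ ^ (-p - 2) * M ^ ε := by
    have hexp : -p * (1 + ε) = -p - 2 := by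
      rw [hp_def]
      field_simp
      ring
    rw [heq, Real.mul_rpow hM.le (by positivity), ← Real.rpow_mul hρ.le, hexp,
      Real.rpow_add hM, Real.rpow_one]
    ring
  refine le_of_mul_le_mul_left ?_ (show 0 < M * ρ ^ (-p - 2) by positivity)
  calc M * ρ ^ (-p - 2) * (δ * M ^ ε)
      = δ * u y ^ (1 + ε) := by rw [hpow]; ring
    _ ≤ Δ u y := hsub
    _ ≤ Δ (M • fun x => ballDefect x₀ R x ^ (-p)) y :=
        laplacian_le_laplacian_of_eventuallyLE hu (hbarrier.const_smul M) hle heq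
    _ = M * Δ (fun x => ballDefect x₀ R x ^ (-p)) y := laplacian_smul M hbarrier
    _ ≤ M * (barrierConst (finrank ℝ E) p * R ^ 2 * ρ ^ (-p - 2)) := by
        gcongr
        exact laplacian_ballDefect_rpow_neg_le (by positivity) hy
    _ = M * ρ ^ (-p - 2) * (barrierConst (finrank ℝ E) p * R ^ 2) := by ring

theorem le_kellerOssermanBound (hR : 0 < R) (hδ : 0 < δ) (hε : 0 < ε)
    (huc : ContinuousOn u (closedBall x₀ R)) (hu : ContDiffOn ℝ 2 u (ball x₀ R))
    (hsub : ∀ x ∈ ball x₀ R, 0 < u x → δ * u x ^ (1 + ε) ≤ Δ u x) :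
    u x₀ ≤ kellerOssermanBound (finrank ℝ E) R δ ε := by
  rcases le_or_gt (u x₀) 0 with hu₀ | hu₀
  · exact hu₀.trans (kellerOssermanBound_pos _ hR hδ hε).le
  have : ProperSpace E := FiniteDimensional.proper ℝ E
  set p := 2 / ε
  obtain ⟨y, hy, hmax⟩ := exists_isMaxOn_mul_ballDefect_rpow hR (p := p) (by positivity) huc hu₀
  set M := u y * ballDefect x₀ R y ^ p with hM_def
  have hcenter : u x₀ * (R ^ 2) ^ p ≤ M := by
    simpa [ballDefect_center] using hmax (mem_closedBall_self hR.le)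
  have hM : 0 < M := lt_of_lt_of_le (by positivity) hcenter
  have hle : u ≤ᶠ[𝓝 y] fun x => M * ballDefect x₀ R x ^ (-p) := by
    filter_upwards [isOpen_ball.mem_nhds hy] with x hx
    have hρ := ballDefect_pos hx
    rw [Real.rpow_neg hρ.le, ← div_eq_mul_inv, le_div_iff₀ (by positivity)]
    exact hmax (ball_subset_closedBall hx)
  have hρ := ballDefect_pos hy
  have heq : u y = M * ballDefect x₀ R y ^ (-p) := by
    rw [hM_def, mul_assoc, ← Real.rpow_add hρ, add_neg_cancel, Real.rpow_zero, mul_one]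
  have huy : 0 < u y := by rw [heq]; positivity
  have hMε := mul_rpow_le_of_eventuallyLE_barrier hε hM hy
    (hu.contDiffAt (isOpen_ball.mem_nhds hy)) hle heq (hsub y hy huy)
  exact le_kellerOssermanBound_of_mul_rpow_le hR hδ hε hu₀.le hcenter hMε

theorem stmt_2_general (hR : 0 < R) (hδ : 0 < δ) (hε : 0 < ε) (a : E × ℝ → ℝ)
    (hlow : ∀ x ∈ ball x₀ R, ∀ μ : ℝ, 0 ≤ μ → δ * |μ| ^ (1 + ε) ≤ a (x, μ))
    (hupp : ∀ x ∈ ball x₀ R, ∀ μ : ℝ, μ ≤ 0 → a (x, μ) ≤ -(δ * |μ| ^ (1 + ε)))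
    (huc : ContinuousOn u (closedBall x₀ R)) (hu : ContDiffOn ℝ 2 u (ball x₀ R))
    (heq : ∀ x ∈ ball x₀ R, -Δ u x + a (x, u x) = 0) :
    |u x₀| ≤ kellerOssermanBound (finrank ℝ E) R δ ε := by
  refine abs_le'.2 ⟨le_kellerOssermanBound hR hδ hε huc hu fun x hx hpos => ?_,
    le_kellerOssermanBound (u := -u) hR hδ hε huc.neg hu.neg fun x hx hneg => ?_⟩
  · have h := hlow x hx (u x) hpos.le
    rw [abs_of_pos hpos] at h
    linarith [heq x hx]
  · have hux : u x < 0 := neg_pos.1 hneg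
    have h := hupp x hx (u x) hux.le
    rw [abs_of_neg hux] at h
    simp only [laplacian_neg, Pi.neg_apply]
    linarith [heq x hx]

end KellerOsserman

theorem stmt_2 (n : ℕ) (hn : 2 ≤ n) (x₀ : EuclideanSpace ℝ (Fin n)) (R : ℝ) (hR : 0 < R)
    (a : EuclideanSpace ℝ (Fin n) × ℝ → ℝ)
    (ha : ContDiffOn ℝ 2 a (closedBall x₀ R ×ˢ (univ : Set ℝ)))
    (ha0 : ∀ x ∈ closedBall x₀ R, a (x, 0) = 0)
    (hamono : ∀ x ∈ closedBall x₀ R, ∀ μ : ℝ, 0 ≤ deriv (fun t => a (x, t)) μ)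
    (F : ℝ → ℝ) (δ ε : ℝ) (hδ : 0 < δ) (hε : 0 < ε)
    (hF : ContDiff ℝ 2 F) (hF0 : F 0 = 0)
    (hFmono : ∀ μ : ℝ, 0 ≤ deriv F μ)
    (hFgrow : ∀ μ : ℝ, δ * |μ| ^ (1 + ε) ≤ |F μ|)
    (hlow : ∀ x ∈ closedBall x₀ R, ∀ μ : ℝ, 0 ≤ μ → F μ ≤ a (x, μ))
    (hupp : ∀ x ∈ closedBall x₀ R, ∀ μ : ℝ, μ ≤ 0 → a (x, μ) ≤ F μ) :
    ∃ C : ℝ, 0 < C ∧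
      ∀ u : EuclideanSpace ℝ (Fin n) → ℝ,
        ContinuousOn u (closedBall x₀ R) → ContDiffOn ℝ 2 u (ball x₀ R) →
        (∀ x ∈ ball x₀ R, -lap u x + a (x, u x) = 0) →
        |u x₀| ≤ C := by
  have hF_mono : Monotone F := monotone_of_deriv_nonneg (hF.differentiable two_ne_zero) hFmono
  refine ⟨kellerOssermanBound n R δ ε, kellerOssermanBound_pos n hR hδ hε, fun u huc hu heq => ?_⟩
  have hlow' : ∀ x ∈ ball x₀ R, ∀ μ : ℝ, 0 ≤ μ → δ * |μ| ^ (1 + ε) ≤ a (x, μ) :=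
    fun x hx μ hμ => (hFgrow μ).trans_eq (abs_of_nonneg (hF0 ▸ hF_mono hμ)) |>.trans
      (hlow x (ball_subset_closedBall hx) μ hμ)
  have hupp' : ∀ x ∈ ball x₀ R, ∀ μ : ℝ, μ ≤ 0 → a (x, μ) ≤ -(δ * |μ| ^ (1 + ε)) :=
    fun x hx μ hμ => (hupp x (ball_subset_closedBall hx) μ hμ).trans
      (le_neg_of_le_neg ((hFgrow μ).trans_eq (abs_of_nonpos (hF0 ▸ hF_mono hμ))))
  simpa using stmt_2_general hR hδ hε a hlow' hupp' huc hu fun x hx => by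
    rw [← lap_eq_laplacian (hu.contDiffAt (isOpen_ball.mem_nhds hx))]
    exact heq x hx
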